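/- Let κ(u) := inf{t ≥ 0 : A(t) > u} for u ≥ 0. Then: (a) for every i ∈ I, κ(A(s_i)) = s_i; (b) if i ∈ I is such that for every ε > 0 there exists j ∈ I with t_i ≤ s_j < t_i + ε, then κ(A(t_i)) = t_i. -/

import Mathlib

/-!
For `c ≥ 0`, the set `{x ≥ 0 : A x > A c}` has infimum `c` exactly when `A` increases strictly
to the right of `c`. This happens as soon as intervals `(s j, t j)` start at points `s j ≥ c` arbitrarily close to
`c`: for `x > c`, part of such an interval lies in `(c, x)` and adds positive mass. Then the
set is `(c, ∞)`, by monotonicity of `A`. For `c = s i` the interval `(s i, t i)` itself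
will do; for `c = t i` the existence of such intervals is the hypothesis.
-/

open Set MeasureTheory

theorem volume_inter_Icc_ne_top (O : Set ℝ) (x : ℝ) : volume (O ∩ Icc 0 x) ≠ ⊤ :=
  measure_ne_top_of_subset inter_subset_right measure_Icc_lt_top.ne

theorem occupation_mono (O : Set ℝ) {x y : ℝ} (h : x ≤ y) :
    (volume (O ∩ Icc 0 x)).toReal ≤ (volume (O ∩ Icc 0 y)).toReal :=
  ENNReal.toReal_mono (volume_inter_Icc_ne_top O y)
    (measure_mono (inter_subset_inter_right _ (Icc_subset_Icc_right h)))

/-- The occupation time increases strictly across any `[c, x]` with `c ≥ 0` that contains a nonempty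
interval `(a, b) ⊆ O`. -/
theorem occupation_lt (O : Set ℝ) {c x a b : ℝ} (hc : 0 ≤ c) (hca : c ≤ a) (hab : a < b)
    (hbx : b ≤ x) (hO : Ioo a b ⊆ O) :
    (volume (O ∩ Icc 0 c)).toReal < (volume (O ∩ Icc 0 x)).toReal := by
  refine (ENNReal.toReal_lt_toReal (volume_inter_Icc_ne_top O c)
    (volume_inter_Icc_ne_top O x)).2 ?_
  have hd : Disjoint (O ∩ Icc 0 c) (Ioo a b) :=
    disjoint_left.2 fun y hy hy' => absurd hy.2.2 (not_le.2 (hca.trans_lt hy'.1))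
  have hsub : O ∩ Icc 0 c ∪ Ioo a b ⊆ O ∩ Icc 0 x := by
    rintro y (⟨hyO, hy0, hyc⟩ | hy)
    · exact ⟨hyO, hy0, by linarith⟩
    · exact ⟨hO hy, by linarith [hy.1], by linarith [hy.2]⟩
  have hpos : volume (Ioo a b) ≠ 0 := by simpa using hab
  calc volume (O ∩ Icc 0 c)
      < volume (O ∩ Icc 0 c) + volume (Ioo a b) :=
        ENNReal.lt_add_right (volume_inter_Icc_ne_top O c) hpos
    _ = volume (O ∩ Icc 0 c ∪ Ioo a b) := (measure_union hd measurableSet_Ioo).symm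
    _ ≤ volume (O ∩ Icc 0 x) := measure_mono hsub

/-- With `𝒪 = ⋃ᵢ (sᵢ,tᵢ)` a disjoint union of intervals of infinite total measure,
`A(x) = Leb(𝒪 ∩ [0,x])` and `κ(u) = inf{x ≥ 0 : A(x) > u}`:
(a) `κ(A(sᵢ)) = sᵢ` for every `i`;
(b) if for every `ε > 0` there is `j` with `tᵢ ≤ sⱼ < tᵢ + ε`, then `κ(A(tᵢ)) = tᵢ`. -/
theorem kappa_inverse_time_change {I : Type*} [Countable I] (s t : I → ℝ)
    (hs : ∀ i, 0 ≤ s i) (hst : ∀ i, s i < t i)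
    (hdisj : Pairwise fun i j => Disjoint (Ioo (s i) (t i)) (Ioo (s j) (t j)))
    (O : Set ℝ) (hO : O = ⋃ i, Ioo (s i) (t i))
    (hinf : volume O = ⊤)
    (A : ℝ → ℝ) (hA : ∀ x : ℝ, A x = (volume (O ∩ Icc 0 x)).toReal)
    (κ : ℝ → ℝ) (hκ : ∀ u : ℝ, κ u = sInf {x : ℝ | 0 ≤ x ∧ u < A x}) :
    (∀ i, κ (A (s i)) = s i) ∧
    (∀ i, (∀ ε > (0 : ℝ), ∃ j, t i ≤ s j ∧ s j < t i + ε) → κ (A (t i)) = t i) := by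
  -- Both parts are instances of one claim about a point `c` approached from the right by `s j`'s.
  have key : ∀ c, 0 ≤ c → (∀ ε > (0 : ℝ), ∃ j, c ≤ s j ∧ s j < c + ε) → κ (A c) = c := by
    intro c hc h
    have hset : {x : ℝ | 0 ≤ x ∧ A c < A x} = Ioi c := by
      ext x
      simp only [mem_ofPred_eq, mem_Ioi, hA]
      constructor
      · rintro ⟨-, hx⟩
        by_contra! hle
        exact absurd hx (not_lt.2 (occupation_mono O hle))
      · intro hx
        obtain ⟨j, hj, hj'⟩ := h (x - c) (sub_pos.2 hx)
        refine ⟨hc.trans hx.le, occupation_lt O hc hj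
          (lt_min (hst j) (by linarith)) (min_le_right (t j) x) ?_⟩
        rw [hO]
        exact (Ioo_subset_Ioo_right (min_le_left _ _)).trans
          (subset_iUnion (fun i => Ioo (s i) (t i)) j)
    rw [hκ, hset, csInf_Ioi]
  exact ⟨fun i => key _ (hs i) fun ε hε => ⟨i, le_rfl, by linarith⟩,
    fun i h => key _ ((hs i).trans (hst i).le) h⟩
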